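/- arXiv:1806.07411 — 2 statements merged into one kernel-verified Lean document; each statement's English description precedes it below -/
import Mathlib

section
/- The perturbed path of a random Markov system is a Markov chain with transition matrix M·N: let S be a finite set, q a probability distribution on the functions f : S → S, N a row-stochastic S × S matrix, (F_n)_{n ∈ ℕ} an i.i.d. sequence of random functions with law q, and let (Y_n) be a process with Y₀ = y₀ such that, conditionally on (F_0, …, F_n, Y_0, …, Y_n), the next state Y_{n+1} has distribution (D_{F_n}·N)(Y_n, ·), i.e. P(Y_{n+1} = j | F_0,…,F_n, Y_0,…,Y_n) = N(F_n(Y_n), j). Then (Y_n) is a Markov chain with transition matrix M·N: for all n and all j ∈ S, almost surely P(Y_{n+1} = j | Y_0, …, Y_n) = (M·N)(Y_n, j), where M = ∑_f q(f) D_f. -/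
open scoped BigOperators ENNReal
open MeasureTheory

/-- The deterministic transition matrix `D_f` of a function `f : S → S`. -/
def detMatrix {S : Type*} [Fintype S] [DecidableEq S] (f : S → S) : Matrix S S ℝ :=
  fun i j => if f i = j then 1 else 0

/-!
Condition on the driving maps `(F_0, …, F_{n-1})` as well as on the path `(Y_0, …, Y_n)`: on each
cell of this finer history, independence of `F_n` averages the rows `N(F_n(Y_n), ·)` to the row of
`M·N` at `Y_n`, which depends on the path alone, so the formula survives summing over the cells.

Neither `F_n` nor `Y_n` is assumed measurable, and `μ` of a non-measurable set is only an outer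
measure. What makes the cells additive is that each step splits a cell into pieces whose outer
measures sum to that of the cell; this forces the pieces to be null-measurable.
-/

section NullMeasurable

variable {Ω β : Type*} [MeasurableSpace Ω] {μ : Measure Ω}

theorem nullMeasurableSet_of_measure_add_measure_sdiff_le {P E : Set Ω} (hPE : P ⊆ E)
    (hE : NullMeasurableSet E μ) (hE_fin : μ E ≠ ∞) (hadd : μ P + μ (E \ P) ≤ μ E) :
    NullMeasurableSet P μ := by
  let U := toMeasurable μ (E \ P)
  have hU_meas : NullMeasurableSet U μ := (measurableSet_toMeasurable μ _).nullMeasurableSet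
  have hU_eq : μ U = μ (E \ P) := measure_toMeasurable _
  have hsub : E \ U ⊆ P := fun ω hω =>
    by_contra fun hωP => hω.2 (subset_toMeasurable μ _ ⟨hω.1, hωP⟩)
  have hU_fin : μ U ≠ ∞ := hU_eq ▸ measure_ne_top_of_subset Set.sdiff_subset hE_fin
  have hge : μ P ≤ μ (E \ U) := calc
    μ P ≤ μ E - μ U := ENNReal.le_sub_of_add_le_right hU_fin (hU_eq ▸ hadd)
    _ ≤ μ (E \ U) := le_measure_sdiff
  have hae : (E \ U : Set Ω) =ᵐ[μ] P :=
    ae_eq_of_subset_of_measure_ge hsub hge (hE.diff hU_meas)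
      (measure_ne_top_of_subset hPE hE_fin)
  exact (hE.diff hU_meas).congr hae

variable [Countable β] {E : Set Ω} {Z : Ω → β}

theorem nullMeasurableSet_preimage_singleton_inter_of_tsum_le (hE : NullMeasurableSet E μ)
    (hE_fin : μ E ≠ ∞) (hsum : ∑' b, μ (Z ⁻¹' {b} ∩ E) ≤ μ E) (b : β) :
    NullMeasurableSet (Z ⁻¹' {b} ∩ E) μ := by
  refine nullMeasurableSet_of_measure_add_measure_sdiff_le Set.inter_subset_right hE hE_fin
    (le_trans ?_ hsum)
  have hcover : E \ (Z ⁻¹' {b} ∩ E) ⊆ ⋃ b' : ({b}ᶜ : Set β), Z ⁻¹' {b'.1} ∩ E :=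
    fun ω hω => Set.mem_iUnion.2 ⟨⟨Z ω, fun hb => hω.2 ⟨hb, hω.1⟩⟩, rfl, hω.1⟩
  calc μ (Z ⁻¹' {b} ∩ E) + μ (E \ (Z ⁻¹' {b} ∩ E))
      ≤ μ (Z ⁻¹' {b} ∩ E) + ∑' b' : ({b}ᶜ : Set β), μ (Z ⁻¹' {b'.1} ∩ E) := by
        gcongr
        exact (measure_mono hcover).trans (measure_iUnion_le _)
    _ = ∑' b, μ (Z ⁻¹' {b} ∩ E) := by
        rw [← tsum_singleton b fun b => μ (Z ⁻¹' {b} ∩ E)]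
        exact Summable.tsum_add_tsum_compl (s := {b}) (f := fun b => μ (Z ⁻¹' {b} ∩ E))
          ENNReal.summable ENNReal.summable

theorem measure_inter_eq_tsum_preimage_singleton
    (hZ : ∀ b, NullMeasurableSet (Z ⁻¹' {b} ∩ E) μ) (T : Set Ω) :
    μ (T ∩ E) = ∑' b, μ (T ∩ (Z ⁻¹' {b} ∩ E)) := by
  have hE : ⋃ b, Z ⁻¹' {b} ∩ E = E := by
    rw [← Set.iUnion_inter, ← Set.preimage_iUnion, Set.iUnion_of_singleton, Set.preimage_univ,
      Set.univ_inter]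
  have hdisj : Pairwise (Function.onFun (AEDisjoint μ) fun b => Z ⁻¹' {b} ∩ E) :=
    (pairwise_disjoint_fiber Z).mono fun _ _ h =>
      (h.mono Set.inter_subset_left Set.inter_subset_left).aedisjoint
  calc μ (T ∩ E)
      = μ.restrict (⋃ b, Z ⁻¹' {b} ∩ E) T := by
        rw [Measure.restrict_apply₀' (.iUnion hZ), hE]
    _ = ∑' b, μ (T ∩ (Z ⁻¹' {b} ∩ E)) := by
        rw [Measure.restrict_iUnion_ae hdisj hZ, Measure.sum_apply_of_countable]
        simp only [Measure.restrict_apply₀' (hZ _)]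

theorem measure_inter_eq_mul_of_forall_preimage_singleton
    (hZ : ∀ b, NullMeasurableSet (Z ⁻¹' {b} ∩ E) μ) {T : Set Ω} {c : ℝ≥0∞}
    (hT : ∀ b, μ (T ∩ (Z ⁻¹' {b} ∩ E)) = c * μ (Z ⁻¹' {b} ∩ E)) :
    μ (T ∩ E) = c * μ E := by
  have hE : μ E = ∑' b, μ (Z ⁻¹' {b} ∩ E) := by
    simpa only [Set.univ_inter] using measure_inter_eq_tsum_preimage_singleton hZ Set.univ
  rw [measure_inter_eq_tsum_preimage_singleton hZ, hE, ← ENNReal.tsum_mul_left]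
  exact tsum_congr hT

theorem nullMeasurableSet_preimage_singleton_inter_of_measure_eq_pmf (p : PMF β)
    (hE : NullMeasurableSet E μ) (hE_fin : μ E ≠ ∞)
    (hp : ∀ b, μ (Z ⁻¹' {b} ∩ E) = p b * μ E) (b : β) :
    NullMeasurableSet (Z ⁻¹' {b} ∩ E) μ := by
  refine nullMeasurableSet_preimage_singleton_inter_of_tsum_le hE hE_fin (le_of_eq ?_) b
  simp only [hp, ENNReal.tsum_mul_right, p.tsum_coe, one_mul]

end NullMeasurable

section PathCylinder

variable {Ω S : Type*}

/-- The event that the process `X` starts with the finite word `s`, that is, `X 0 = s 0`, …,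
`X (n - 1) = s (n - 1)`. -/
def pathCylinder (X : ℕ → Ω → S) {n : ℕ} (s : Fin n → S) : Set Ω :=
  {ω | ∀ k : Fin n, X k.val ω = s k}

theorem pathCylinder_eq_preimage (X : ℕ → Ω → S) {n : ℕ} (s : Fin n → S) :
    pathCylinder X s = (fun ω (k : Fin n) => X k.val ω) ⁻¹' {s} := by
  ext ω
  exact funext_iff.symm

theorem pathCylinder_zero (X : ℕ → Ω → S) (s : Fin 0 → S) : pathCylinder X s = Set.univ :=
  Set.eq_univ_of_forall fun _ k => k.elim0

theorem pathCylinder_succ (X : ℕ → Ω → S) {n : ℕ} (s : Fin (n + 1) → S) :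
    pathCylinder X s = X n ⁻¹' {s (Fin.last n)} ∩ pathCylinder X (Fin.init s) := by
  ext ω
  exact Fin.forall_fin_succ'.trans and_comm

theorem pathCylinder_snoc (X : ℕ → Ω → S) {n : ℕ} (s : Fin n → S) (x : S) :
    pathCylinder X (Fin.snoc s x : Fin (n + 1) → S) = X n ⁻¹' {x} ∩ pathCylinder X s := by
  rw [pathCylinder_succ, Fin.snoc_last, Fin.init_snoc]

theorem setOf_forall_snoc_and_forall_eq {A : Type*} (F : ℕ → Ω → A) (Y : ℕ → Ω → S) {n m : ℕ}
    (g : Fin n → A) (a : A) (s : Fin m → S) :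
    {ω | (∀ k : Fin (n + 1), F k.val ω = (Fin.snoc g a : Fin (n + 1) → A) k) ∧
      (∀ k : Fin m, Y k.val ω = s k)} =
      F n ⁻¹' {a} ∩ (pathCylinder F g ∩ pathCylinder Y s) := by
  rw [← Set.inter_assoc, ← pathCylinder_snoc]
  rfl

end PathCylinder

/-- `Y` is a path driven by the random inputs `F`: given the past inputs and states, `F n` has law
`q`, and given `F n = a` as well, `Y (n + 1)` has law `K a (Y n)`. Conditional laws are written
as product formulas on cylinders. For a random Markov system the inputs are the maps `f : S → S`
and `K f i` is the row of `N` at `f i`. -/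
structure IsDrivenPath {A S Ω : Type*} [MeasurableSpace Ω] (μ : Measure Ω) (q : PMF A)
    (K : A → S → PMF S) (F : ℕ → Ω → A) (Y : ℕ → Ω → S) : Prop where
  nullMeasurableSet_initial : ∀ i, NullMeasurableSet (Y 0 ⁻¹' {i}) μ
  measure_input : ∀ (n : ℕ) (g : Fin n → A) (s : Fin (n + 1) → S) (a : A),
    μ (F n ⁻¹' {a} ∩ (pathCylinder F g ∩ pathCylinder Y s)) =
      q a * μ (pathCylinder F g ∩ pathCylinder Y s)
  measure_next : ∀ (n : ℕ) (g : Fin n → A) (s : Fin (n + 1) → S) (a : A) (j : S),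
    μ (Y (n + 1) ⁻¹' {j} ∩ (F n ⁻¹' {a} ∩ (pathCylinder F g ∩ pathCylinder Y s))) =
      K a (s (Fin.last n)) j * μ (F n ⁻¹' {a} ∩ (pathCylinder F g ∩ pathCylinder Y s))

namespace IsDrivenPath

variable {A S Ω : Type*} [Countable A] [MeasurableSpace Ω] {μ : Measure Ω}
  [IsFiniteMeasure μ] {q : PMF A} {K : A → S → PMF S} {F : ℕ → Ω → A} {Y : ℕ → Ω → S}

theorem nullMeasurableSet_input (h : IsDrivenPath μ q K F Y) {n : ℕ} {g : Fin n → A}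
    {s : Fin (n + 1) → S} (hgs : NullMeasurableSet (pathCylinder F g ∩ pathCylinder Y s) μ)
    (a : A) : NullMeasurableSet (F n ⁻¹' {a} ∩ (pathCylinder F g ∩ pathCylinder Y s)) μ :=
  nullMeasurableSet_preimage_singleton_inter_of_measure_eq_pmf q hgs (measure_ne_top μ _)
    (h.measure_input n g s) a

theorem nullMeasurableSet_history [Countable S] (h : IsDrivenPath μ q K F Y) (n : ℕ)
    (g : Fin n → A) (s : Fin (n + 1) → S) :
    NullMeasurableSet (pathCylinder F g ∩ pathCylinder Y s) μ := by
  induction n with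
  | zero =>
    simpa only [pathCylinder_succ Y, pathCylinder_zero, Set.inter_univ, Set.univ_inter] using
      h.nullMeasurableSet_initial (s (Fin.last 0))
  | succ n ih =>
    rw [pathCylinder_succ F, pathCylinder_succ Y, Set.inter_left_comm, Set.inter_assoc]
    exact nullMeasurableSet_preimage_singleton_inter_of_measure_eq_pmf _
      (h.nullMeasurableSet_input (ih _ _) _) (measure_ne_top μ _) (h.measure_next n _ _ _) _

theorem measure_next_inter_history [Countable S] (h : IsDrivenPath μ q K F Y) (n : ℕ)
    (g : Fin n → A) (s : Fin (n + 1) → S) (j : S) :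
    μ (Y (n + 1) ⁻¹' {j} ∩ (pathCylinder F g ∩ pathCylinder Y s)) =
      (q.bind fun a => K a (s (Fin.last n))) j * μ (pathCylinder F g ∩ pathCylinder Y s) := by
  have hF := h.nullMeasurableSet_input (h.nullMeasurableSet_history n g s)
  rw [measure_inter_eq_tsum_preimage_singleton hF, PMF.bind_apply, ← ENNReal.tsum_mul_right]
  refine tsum_congr fun a => ?_
  rw [h.measure_next, h.measure_input, mul_left_comm, mul_assoc]

end IsDrivenPath

theorem rms_path_is_markov_chain_general {A S Ω : Type*} [Countable A] [Countable S]
    [MeasurableSpace Ω] {μ : Measure Ω} [IsFiniteMeasure μ] {q : PMF A} {K : A → S → PMF S}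
    {F : ℕ → Ω → A} {Y : ℕ → Ω → S} (h : IsDrivenPath μ q K F Y)
    (n : ℕ) (j : S) (s : Fin (n + 1) → S) :
    μ (Y (n + 1) ⁻¹' {j} ∩ pathCylinder Y s) =
      (q.bind fun a => K a (s (Fin.last n))) j * μ (pathCylinder Y s) := by
  refine measure_inter_eq_mul_of_forall_preimage_singleton
    (Z := fun ω (k : Fin n) => F k.val ω) (fun g => ?_) fun g => ?_ <;>
    rw [← pathCylinder_eq_preimage]
  · exact h.nullMeasurableSet_history n g s
  · exact h.measure_next_inter_history n g s j

section RealWeights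

/-- The probability mass function of a real probability vector. -/
noncomputable def pmfOfReal {α : Type*} [Fintype α] (p : α → ℝ) (hp0 : ∀ a, 0 ≤ p a)
    (hp1 : ∑ a, p a = 1) : PMF α :=
  PMF.ofFintype (fun a => ENNReal.ofReal (p a)) <| by
    rw [← ENNReal.ofReal_sum_of_nonneg fun a _ => hp0 a, hp1, ENNReal.ofReal_one]

variable {S : Type*} [Fintype S] [DecidableEq S]

theorem detMatrix_mul_apply (f : S → S) (N : Matrix S S ℝ) (i j : S) :
    (detMatrix f * N) i j = N (f i) j := by
  simp [Matrix.mul_apply, detMatrix]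

theorem sum_smul_detMatrix_mul_apply (q : (S → S) → ℝ) (N : Matrix S S ℝ) (i j : S) :
    ((∑ f, q f • detMatrix f) * N) i j = ∑ f, q f * N (f i) j := by
  simp only [Finset.sum_mul, Matrix.sum_apply, Matrix.smul_mul, Matrix.smul_apply,
    detMatrix_mul_apply, smul_eq_mul]

theorem pmfOfReal_bind_apply_eq_ofReal_mul_apply {q : (S → S) → ℝ} (hq0 : ∀ f, 0 ≤ q f)
    (hq1 : ∑ f, q f = 1) {N : Matrix S S ℝ} (hN0 : ∀ i j, 0 ≤ N i j)
    (hN1 : ∀ i, ∑ j, N i j = 1) (i j : S) :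
    ((pmfOfReal q hq0 hq1).bind fun f => pmfOfReal (N (f i)) (hN0 (f i)) (hN1 (f i))) j =
      ENNReal.ofReal (((∑ f, q f • detMatrix f) * N) i j) := by
  rw [sum_smul_detMatrix_mul_apply,
    ENNReal.ofReal_sum_of_nonneg fun f _ => mul_nonneg (hq0 f) (hN0 (f i) j), PMF.bind_apply,
    tsum_fintype]
  exact Finset.sum_congr rfl fun f _ => (ENNReal.ofReal_mul (hq0 f)).symm

end RealWeights

/-- The perturbed path `(Y_n)` of a random Markov system is a Markov chain with
transition matrix `M·N`, where `M = ∑_f q(f) D_f`.  Hypotheses (all in elementary,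
finite-dimensional form): `(F_n)` is i.i.d. with law `q`; each `F_n` is independent of
`(F_0, …, F_{n-1}, Y_0, …, Y_n)`; and conditionally on `(F_0, …, F_n, Y_0, …, Y_n)`,
the next state `Y_{n+1}` has law `N(F_n(Y_n), ·)`.  Conclusion: the elementary form of
`P(Y_{n+1} = j | Y_0, …, Y_n) = (M·N)(Y_n, j)` a.s. -/
theorem rms_path_is_markov_chain
    {S : Type*} [Fintype S] [DecidableEq S] [Nonempty S]
    {Ω : Type*} [MeasurableSpace Ω] (μ : Measure Ω) [IsProbabilityMeasure μ]
    (q : (S → S) → ℝ) (hq0 : ∀ f, 0 ≤ q f) (hq1 : ∑ f : S → S, q f = 1)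
    (N : Matrix S S ℝ) (hN0 : ∀ i j, 0 ≤ N i j) (hN1 : ∀ i, ∑ j, N i j = 1)
    (F : ℕ → Ω → (S → S))
    (hiid : ∀ (n : ℕ) (g : Fin (n + 1) → (S → S)),
      μ {ω | ∀ k : Fin (n + 1), F k.val ω = g k} =
        ∏ k : Fin (n + 1), ENNReal.ofReal (q (g k)))
    (y₀ : S) (Y : ℕ → Ω → S)
    (hY0 : ∀ ω, Y 0 ω = y₀)
    (hFindep : ∀ (n : ℕ) (g : Fin (n + 1) → (S → S)) (s : Fin (n + 1) → S),
      μ {ω | (∀ k : Fin (n + 1), F k.val ω = g k) ∧ (∀ k : Fin (n + 1), Y k.val ω = s k)} =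
        ENNReal.ofReal (q (g (Fin.last n))) *
          μ {ω | (∀ k : Fin n, F k.val ω = g k.castSucc) ∧
                 (∀ k : Fin (n + 1), Y k.val ω = s k)})
    (hcond : ∀ (n : ℕ) (j : S) (g : Fin (n + 1) → (S → S)) (s : Fin (n + 1) → S),
      μ ({ω | Y (n + 1) ω = j} ∩
          {ω | (∀ k : Fin (n + 1), F k.val ω = g k) ∧ (∀ k : Fin (n + 1), Y k.val ω = s k)}) =
        ENNReal.ofReal (N (g (Fin.last n) (s (Fin.last n))) j) *
          μ {ω | (∀ k : Fin (n + 1), F k.val ω = g k) ∧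
                 (∀ k : Fin (n + 1), Y k.val ω = s k)}) :
    ∀ (n : ℕ) (j : S) (s : Fin (n + 1) → S),
      μ ({ω | Y (n + 1) ω = j} ∩ {ω | ∀ k : Fin (n + 1), Y k.val ω = s k}) =
        ENNReal.ofReal (((∑ f : S → S, q f • detMatrix f) * N) (s (Fin.last n)) j) *
          μ {ω | ∀ k : Fin (n + 1), Y k.val ω = s k} := by
  have hpath : IsDrivenPath μ (pmfOfReal q hq0 hq1)
      (fun f i => pmfOfReal (N (f i)) (hN0 (f i)) (hN1 (f i))) F Y :=
    { nullMeasurableSet_initial := fun i => by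
        simpa only [Set.preimage, Set.mem_singleton_iff, hY0] using
          (MeasurableSet.const (y₀ = i)).nullMeasurableSet
      measure_input := fun n g s f => by
        have hind := hFindep n (Fin.snoc g f) s
        simp only [setOf_forall_snoc_and_forall_eq, Fin.snoc_last, Fin.snoc_castSucc] at hind
        exact hind
      measure_next := fun n g s f j => by
        have hnext := hcond n j (Fin.snoc g f) s
        simp only [setOf_forall_snoc_and_forall_eq, Fin.snoc_last] at hnext
        exact hnext }
  intro n j s
  rw [← pmfOfReal_bind_apply_eq_ofReal_mul_apply hq0 hq1 hN0 hN1]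
  exact rms_path_is_markov_chain_general hpath n j s
end

section
/- Mutual information recursion for a coupled Markov chain: let S be a finite set and let (X_n, Y_n)_{n ∈ ℕ} be a Markov chain on S × S with row-stochastic transition matrix W and deterministic initial state (X_0, Y_0) = (x_0, y_0). Assume there are row-stochastic S × S matrices M and M' that are the conditional marginals of W uniformly in the other coordinate: for all k, l, k' ∈ S, ∑_{l'} W((k,l),(k',l')) = M(k,k'), and for all k, l, l' ∈ S, ∑_{k'} W((k,l),(k',l')) = M'(l,l'). Let MI⁽ⁿ⁾(x₀,y₀) denote the mutual information between the random vectors (X_0, X_1, …, X_n) and (Y_0, Y_1, …, Y_n), and define the one-step quantity MI⁽¹⁾(k,l) = ∑_{k',l'} W((k,l),(k',l')) · log( W((k,l),(k',l')) / (M(k,k')·M'(l,l')) ) (with the convention 0·log(0/x) = 0). Then for every n ≥ 0, MI⁽ⁿ⁺¹⁾(x₀,y₀) = MI⁽ⁿ⁾(x₀,y₀) + ∑_{k,l ∈ S} (W^n)((x₀,y₀),(k,l)) · MI⁽¹⁾(k,l), where W^n is the n-th matrix power of W. -/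
open scoped BigOperators ENNReal
open MeasureTheory

/-- `mlog p q = p * log (p / q)`, with the convention `0 * log (0 / q) = 0`. -/
noncomputable def mlog (p q : ℝ) : ℝ := if p = 0 then 0 else p * Real.log (p / q)

/-- The mutual information `MI⁽ⁿ⁾` between the random vectors `(X_0, …, X_n)` and
`(Y_0, …, Y_n)` of a pair of discrete-valued processes. -/
noncomputable def pathMI {S Ω : Type*} [Fintype S] [MeasurableSpace Ω]
    (μ : Measure Ω) (X Y : ℕ → Ω → S) (n : ℕ) : ℝ :=
  ∑ a : Fin (n + 1) → S, ∑ b : Fin (n + 1) → S,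
    mlog ((μ {ω | (∀ k : Fin (n + 1), X k.val ω = a k) ∧
          (∀ k : Fin (n + 1), Y k.val ω = b k)}).toReal)
      ((μ {ω | ∀ k : Fin (n + 1), X k.val ω = a k}).toReal *
        (μ {ω | ∀ k : Fin (n + 1), Y k.val ω = b k}).toReal)

/-!
The coordinates of the coupled chain are Markov chains with matrices `M` and `M'`, so `MI⁽ⁿ⁾` is the
relative entropy of the law of `((X₀, Y₀), …, (Xₙ, Yₙ))` with respect to the law of an independent
pair of such chains. Both laws are Markov, hence their likelihood ratio gains one factor
`W / (M ⊗ M')` per step. Averaged over the step from `(Xₙ, Yₙ) = (k, l)`, the logarithm of that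
factor is `MI⁽¹⁾(k, l)`, and averaging over the law `ν Wⁿ` of `(Xₙ, Yₙ)`, where `ν` is the initial
law, gives the increment.
-/

open Matrix
open scoped Kronecker

lemma mlog_mul_mul {p q r s : ℝ} (h : p * r ≠ 0 → q * s ≠ 0) :
    mlog (p * r) (q * s) = mlog p q * r + p * mlog r s := by
  by_cases hpr : p * r = 0
  · rcases mul_eq_zero.mp hpr with rfl | rfl <;> simp [mlog]
  obtain ⟨hp, hr⟩ := mul_ne_zero_iff.mp hpr
  obtain ⟨hq, hs⟩ := mul_ne_zero_iff.mp (h hpr)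
  simp only [mlog, hpr, hp, hr, if_false]
  rw [mul_div_mul_comm, Real.log_mul (div_ne_zero hp hq) (div_ne_zero hr hs)]
  ring

/-- The relative entropy `D(p ‖ q)` of two weight functions on a finite type. -/
noncomputable def relEntropy {ι : Type*} [Fintype ι] (p q : ι → ℝ) : ℝ := ∑ i, mlog (p i) (q i)

section FiberSum

variable {E S T R : Type*} [AddCommMonoid R]

/-- The push-forward of the weight function `f` along `π`. -/
def fiberSum [Fintype E] [DecidableEq S] (π : E → S) (f : E → R) (s : S) : R :=
  ∑ x with π x = s, f x

lemma fiberSum_fst [Fintype S] [Fintype T] [DecidableEq S] (f : S × T → R) (s : S) :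
    fiberSum Prod.fst f s = ∑ t, f (s, t) := by
  simp only [fiberSum, Finset.sum_filter, Fintype.sum_prod_type_right, Finset.sum_ite_eq',
    Finset.mem_univ, if_true]

lemma fiberSum_snd [Fintype S] [Fintype T] [DecidableEq T] (f : S × T → R) (t : T) :
    fiberSum Prod.snd f t = ∑ s, f (s, t) := by
  simp only [fiberSum, Finset.sum_filter, Fintype.sum_prod_type, Finset.sum_ite_eq',
    Finset.mem_univ, if_true]

end FiberSum

section PathWeight

variable {E S T R : Type*} [CommSemiring R]

/-- The weight that the Markov chain with initial weights `ν` and transition matrix `W` gives to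
the path `e 0, …, e n`. -/
def pathWeight (ν : E → R) (W : Matrix E E R) (n : ℕ) (e : Fin (n + 1) → E) : R :=
  ν (e 0) * ∏ k : Fin n, W (e k.castSucc) (e k.succ)

lemma pathWeight_snoc (ν : E → R) (W : Matrix E E R) (n : ℕ) (e : Fin (n + 1) → E) (x : E) :
    pathWeight ν W (n + 1) (Fin.snoc (α := fun _ ↦ E) e x) =
      pathWeight ν W n e * W (e (Fin.last n)) x := by
  simp only [pathWeight, Fin.prod_univ_castSucc, ← Fin.castSucc_zero, Fin.succ_castSucc,
    Fin.succ_last, Fin.snoc_castSucc, Fin.snoc_last, mul_assoc]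

lemma pathWeight_nonneg {ν : E → ℝ} {W : Matrix E E ℝ} (hν : 0 ≤ ν) (hW : ∀ x y, 0 ≤ W x y)
    (n : ℕ) (e : Fin (n + 1) → E) : 0 ≤ pathWeight ν W n e :=
  mul_nonneg (hν _) (Finset.prod_nonneg fun _ _ ↦ hW _ _)

lemma pathWeight_single [DecidableEq E] (x₀ : E) (W : Matrix E E R) (n : ℕ)
    (e : Fin (n + 1) → E) :
    pathWeight (Pi.single x₀ 1) W n e =
      if e 0 = x₀ then ∏ k : Fin n, W (e k.castSucc) (e k.succ) else 0 := by
  simp only [pathWeight, Pi.single_apply, ite_mul, one_mul, zero_mul]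

lemma pathWeight_kronecker (ν : S → R) (ν' : T → R) (M : Matrix S S R) (M' : Matrix T T R)
    (n : ℕ) (e : Fin (n + 1) → S × T) :
    pathWeight (fun p ↦ ν p.1 * ν' p.2) (M ⊗ₖ M') n e =
      pathWeight ν M n (Prod.fst ∘ e) * pathWeight ν' M' n (Prod.snd ∘ e) := by
  simp only [pathWeight, kroneckerMap_apply, Finset.prod_mul_distrib, Function.comp_apply]
  ring

variable [Fintype E]

lemma sum_eq_sum_sum_snoc {A : Type*} [AddCommMonoid A] (n : ℕ) (f : (Fin (n + 1) → E) → A) :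
    ∑ e, f e = ∑ e : Fin n → E, ∑ x, f (Fin.snoc (α := fun _ ↦ E) e x) := by
  rw [← Fintype.sum_prod_type_right']
  exact ((Fin.snocEquiv fun _ ↦ E).sum_comp f).symm

lemma sum_pathWeight_mul_last [DecidableEq E] (ν : E → R) (W : Matrix E E R) (n : ℕ)
    (g : E → R) :
    ∑ e, pathWeight ν W n e * g (e (Fin.last n)) = ν ᵥ* W ^ n ⬝ᵥ g := by
  induction n generalizing g with
  | zero =>
    rw [← (Equiv.funUnique (Fin 1) E).symm.sum_comp]
    simp [pathWeight, dotProduct]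
  | succ n ih =>
    calc ∑ e, pathWeight ν W (n + 1) e * g (e (Fin.last (n + 1)))
        = ∑ e, pathWeight ν W n e * (W *ᵥ g) (e (Fin.last n)) := by
          simp only [sum_eq_sum_sum_snoc, pathWeight_snoc, Fin.snoc_last, mul_assoc,
            ← Finset.mul_sum, mulVec, dotProduct]
      _ = ν ᵥ* W ^ (n + 1) ⬝ᵥ g := by
          rw [ih, dotProduct_mulVec, vecMul_vecMul, pow_succ]

lemma sum_pathWeight {ν : E → R} {W : Matrix E E R} (hW : ∀ x, ∑ y, W x y = 1) (n : ℕ) :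
    ∑ e, pathWeight ν W n e = ∑ x, ν x := by
  induction n with
  | zero =>
    rw [← (Equiv.funUnique (Fin 1) E).symm.sum_comp]
    simp [pathWeight]
  | succ n ih =>
    simp only [sum_eq_sum_sum_snoc (n + 1), pathWeight_snoc, ← Finset.mul_sum, hW, mul_one, ih]

lemma fiberSum_pathWeight [DecidableEq S] {π : E → S} {W : Matrix E E R} {M : Matrix S S R}
    (hπ : ∀ x, fiberSum π (W x) = M (π x)) (ν : E → R) (n : ℕ) :
    fiberSum (π ∘ ·) (pathWeight ν W n) = pathWeight (fiberSum π ν) M n := by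
  induction n with
  | zero =>
    funext a
    simp only [fiberSum, Finset.sum_filter]
    rw [← (Equiv.funUnique (Fin 1) E).symm.sum_comp]
    simp [pathWeight, fiberSum, Finset.sum_filter, funext_iff]
  | succ n ih =>
    funext a
    obtain ⟨a, s, rfl⟩ : ∃ b s, a = Fin.snoc (α := fun _ ↦ S) b s :=
      ⟨_, _, (Fin.snoc_init_self a).symm⟩
    rw [pathWeight_snoc, ← ih]
    simp only [fiberSum, Finset.sum_filter, sum_eq_sum_sum_snoc (n + 1), Finset.sum_mul]
    refine Finset.sum_congr rfl fun e _ ↦ ?_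
    have hsnoc (x : E) : π ∘ Fin.snoc (α := fun _ ↦ E) e x = Fin.snoc (α := fun _ ↦ S) a s ↔
        π ∘ e = a ∧ π x = s := by
      rw [Fin.comp_snoc, Fin.snoc_inj]
    by_cases he : π ∘ e = a
    · have hlast : π (e (Fin.last n)) = a (Fin.last n) := congrFun he _
      simp only [hsnoc, he, true_and, if_true, pathWeight_snoc, ← hlast, ← hπ, fiberSum,
        Finset.sum_filter, Finset.mul_sum, mul_ite, mul_zero]
    · simp only [hsnoc, he, false_and, if_false, zero_mul, Finset.sum_const_zero]

lemma relEntropy_pathWeight_succ [DecidableEq E] {ν ν' : E → ℝ} {W V : Matrix E E ℝ}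
    (hW : ∀ x, ∑ y, W x y = 1) {n : ℕ}
    (hac : ∀ e, pathWeight ν W (n + 1) e ≠ 0 → pathWeight ν' V (n + 1) e ≠ 0) :
    relEntropy (pathWeight ν W (n + 1)) (pathWeight ν' V (n + 1)) =
      relEntropy (pathWeight ν W n) (pathWeight ν' V n) +
        ν ᵥ* W ^ n ⬝ᵥ fun x ↦ relEntropy (W x) (V x) := by
  have hterm (e : Fin (n + 1) → E) (x : E) :
      mlog (pathWeight ν W n e * W (e (Fin.last n)) x)
          (pathWeight ν' V n e * V (e (Fin.last n)) x) =
        mlog (pathWeight ν W n e) (pathWeight ν' V n e) * W (e (Fin.last n)) x +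
          pathWeight ν W n e * mlog (W (e (Fin.last n)) x) (V (e (Fin.last n)) x) :=
    mlog_mul_mul (by simpa only [pathWeight_snoc] using hac (Fin.snoc (α := fun _ ↦ E) e x))
  rw [← sum_pathWeight_mul_last]
  simp only [relEntropy, sum_eq_sum_sum_snoc (n + 1), pathWeight_snoc, hterm,
    Finset.sum_add_distrib, ← Finset.mul_sum, hW, mul_one]

end PathWeight

section Law

variable {Ω E S : Type*} [MeasurableSpace Ω] {μ : Measure Ω}

/-- The probability mass function of `F`, which need not be measurable: `law μ F x` is the outer
measure of `{F = x}`. -/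
noncomputable def law (μ : Measure Ω) (F : Ω → E) (x : E) : ℝ := μ.real {ω | F ω = x}

lemma law_le_law_comp [IsFiniteMeasure μ] (π : E → S) (F : Ω → E) (x : E) :
    law μ F x ≤ law μ (π ∘ F) (π x) :=
  measureReal_mono fun _ hω ↦ congrArg π hω

lemma law_comp_ne_zero [IsFiniteMeasure μ] (π : E → S) {F : Ω → E} {x : E}
    (hx : law μ F x ≠ 0) : law μ (π ∘ F) (π x) ≠ 0 :=
  ((measureReal_nonneg.lt_of_ne' hx).trans_le (law_le_law_comp π F x)).ne'

variable [Fintype E]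

lemma measureReal_setOf_le_sum_law [IsFiniteMeasure μ] (F : Ω → E) (Q : E → Prop)
    [DecidablePred Q] : μ.real {ω | Q (F ω)} ≤ ∑ x with Q x, law μ F x :=
  calc μ.real {ω | Q (F ω)}
      ≤ μ.real (⋃ x ∈ Finset.univ.filter Q, {ω | F ω = x}) :=
        measureReal_mono (fun ω hω ↦ by simpa using hω) (measure_ne_top μ _)
    _ ≤ ∑ x with Q x, law μ F x := measureReal_biUnion_finset_le _ _

-- Without measurability only subadditivity is available. Applied to `{F ∈ Q}` and to its
-- complement, it is an equality for both as soon as the masses of the points add up to `1`.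
lemma measureReal_setOf_eq_sum_law [IsProbabilityMeasure μ] {F : Ω → E}
    (hF : ∑ x, law μ F x = 1) (Q : E → Prop) [DecidablePred Q] :
    μ.real {ω | Q (F ω)} = ∑ x with Q x, law μ F x := by
  have hcover : 1 ≤ μ.real {ω | Q (F ω)} + μ.real {ω | ¬ Q (F ω)} := by
    rw [← probReal_univ (μ := μ), ← Set.union_compl_self {ω | Q (F ω)}]
    exact measureReal_union_le _ _
  have hsplit := Finset.sum_filter_add_sum_filter_not Finset.univ Q (law μ F)
  linarith [measureReal_setOf_le_sum_law (μ := μ) F Q,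
    measureReal_setOf_le_sum_law (μ := μ) F fun x ↦ ¬ Q x]

lemma law_comp [IsProbabilityMeasure μ] [DecidableEq S] {F : Ω → E}
    (hF : ∑ x, law μ F x = 1) (π : E → S) : law μ (π ∘ F) = fiberSum π (law μ F) :=
  funext fun s ↦ measureReal_setOf_eq_sum_law hF fun x ↦ π x = s

end Law

section MarkovChain

variable {Ω E S : Type*} [MeasurableSpace Ω] {μ : Measure Ω}

/-- The random vector `(Z 0, …, Z n)`. -/
def initialPath (Z : ℕ → Ω → E) (n : ℕ) (ω : Ω) : Fin (n + 1) → E := fun k ↦ Z k ω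

/-- `Z` is a Markov chain with initial weights `ν` and transition matrix `W`, expressed through its
finite-dimensional laws. That `ν` and `W` are stochastic is not part of the definition. -/
def IsMarkovChain (μ : Measure Ω) (ν : E → ℝ) (W : Matrix E E ℝ) (Z : ℕ → Ω → E) : Prop :=
  ∀ n, law μ (initialPath Z n) = pathWeight ν W n

lemma IsMarkovChain.of_measure_eq {ν : E → ℝ} {W : Matrix E E ℝ} {Z : ℕ → Ω → E} (hν : 0 ≤ ν)
    (hW : ∀ x y, 0 ≤ W x y)
    (h : ∀ n (e : Fin (n + 1) → E),
      μ {ω | ∀ k : Fin (n + 1), Z k ω = e k} = ENNReal.ofReal (pathWeight ν W n e)) :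
    IsMarkovChain μ ν W Z := by
  intro n
  funext e
  simp only [law, initialPath, funext_iff, measureReal_def]
  rw [h, ENNReal.toReal_ofReal (pathWeight_nonneg hν hW n e)]

lemma IsMarkovChain.comp [IsProbabilityMeasure μ] [Fintype E] [DecidableEq S] {ν : E → ℝ}
    {W : Matrix E E ℝ} {M : Matrix S S ℝ} {Z : ℕ → Ω → E} (hZ : IsMarkovChain μ ν W Z)
    (hν : ∑ x, ν x = 1) (hW : ∀ x, ∑ y, W x y = 1) {π : E → S}
    (hπ : ∀ x, fiberSum π (W x) = M (π x)) :
    IsMarkovChain μ (fiberSum π ν) M fun n ↦ π ∘ Z n := by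
  intro n
  have hmass : ∑ e, law μ (initialPath Z n) e = 1 := by rw [hZ n, sum_pathWeight hW, hν]
  rw [← fiberSum_pathWeight hπ, ← hZ n, ← law_comp hmass]
  rfl

end MarkovChain

section MutualInformation

variable {Ω S T : Type*} [MeasurableSpace Ω] [Fintype S] [Fintype T] {μ : Measure Ω}

/-- The mutual information of two finitely-valued random variables, as the relative entropy of
their joint law with respect to the product of their laws. -/
noncomputable def mutualInfo (μ : Measure Ω) (U : Ω → S) (V : Ω → T) : ℝ :=
  relEntropy (law μ fun ω ↦ (U ω, V ω)) fun p ↦ law μ U p.1 * law μ V p.2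

lemma pathMI_eq_mutualInfo (μ : Measure Ω) (X Y : ℕ → Ω → S) (n : ℕ) :
    pathMI μ X Y n = mutualInfo μ (initialPath X n) (initialPath Y n) := by
  simp only [pathMI, mutualInfo, relEntropy, law, initialPath, Fintype.sum_prod_type,
    Prod.mk.injEq, funext_iff, measureReal_def]

lemma mutualInfo_initialPath (μ : Measure Ω) (X : ℕ → Ω → S) (Y : ℕ → Ω → T) (n : ℕ) :
    mutualInfo μ (initialPath X n) (initialPath Y n) =
      relEntropy (law μ (initialPath (fun k ω ↦ (X k ω, Y k ω)) n)) fun e ↦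
        law μ (initialPath X n) (Prod.fst ∘ e) * law μ (initialPath Y n) (Prod.snd ∘ e) := by
  let zip := Equiv.arrowProdEquivProdArrow (Fin (n + 1)) (fun _ ↦ S) (fun _ ↦ T)
  have hzip (e : Fin (n + 1) → S × T) :
      law μ (fun ω ↦ (initialPath X n ω, initialPath Y n ω)) (zip e) =
        law μ (initialPath (fun k ω ↦ (X k ω, Y k ω)) n) e :=
    congrArg μ.real <| Set.ext fun ω ↦
      zip.injective.eq_iff (a := initialPath (fun k ω ↦ (X k ω, Y k ω)) n ω)
  simp only [mutualInfo, relEntropy, ← zip.sum_comp, hzip]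
  rfl

theorem mutual_information_recursion_general [IsProbabilityMeasure μ] [DecidableEq S]
    [DecidableEq T] {ν : S × T → ℝ} {W : Matrix (S × T) (S × T) ℝ} {M : Matrix S S ℝ}
    {M' : Matrix T T ℝ} (hν : ∑ p, ν p = 1) (hW : ∀ p, ∑ p', W p p' = 1)
    (hM : ∀ k l k', ∑ l', W (k, l) (k', l') = M k k')
    (hM' : ∀ k l l', ∑ k', W (k, l) (k', l') = M' l l')
    {X : ℕ → Ω → S} {Y : ℕ → Ω → T} (hXY : IsMarkovChain μ ν W fun n ω ↦ (X n ω, Y n ω)) (n : ℕ) :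
    mutualInfo μ (initialPath X (n + 1)) (initialPath Y (n + 1)) =
      mutualInfo μ (initialPath X n) (initialPath Y n) +
        ν ᵥ* W ^ n ⬝ᵥ fun p ↦ relEntropy (W p) ((M ⊗ₖ M') p) := by
  have hX : IsMarkovChain μ (fiberSum Prod.fst ν) M X :=
    hXY.comp hν hW fun p ↦ funext fun k' ↦ (fiberSum_fst _ k').trans (hM p.1 p.2 k')
  have hY : IsMarkovChain μ (fiberSum Prod.snd ν) M' Y :=
    hXY.comp hν hW fun p ↦ funext fun l' ↦ (fiberSum_snd _ l').trans (hM' p.1 p.2 l')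
  have hMI (m : ℕ) : mutualInfo μ (initialPath X m) (initialPath Y m) =
      relEntropy (pathWeight ν W m)
        (pathWeight (fun p ↦ fiberSum Prod.fst ν p.1 * fiberSum Prod.snd ν p.2) (M ⊗ₖ M') m) := by
    rw [mutualInfo_initialPath, hXY m, hX m, hY m]
    exact congrArg _ (funext fun e ↦ (pathWeight_kronecker _ _ M M' m e).symm)
  rw [hMI, hMI]
  refine relEntropy_pathWeight_succ hW fun e he ↦ ?_
  rw [← hXY (n + 1)] at he
  rw [pathWeight_kronecker, ← hX (n + 1), ← hY (n + 1)]
  exact mul_ne_zero (law_comp_ne_zero (Prod.fst ∘ ·) he) (law_comp_ne_zero (Prod.snd ∘ ·) he)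

end MutualInformation

/-- Mutual information recursion for a coupled Markov chain `(X_n, Y_n)` on `S × S` with
transition matrix `W`, deterministic initial state `(x₀, y₀)`, and conditional marginal
matrices `M`, `M'` (uniform in the other coordinate):
`MI⁽ⁿ⁺¹⁾(x₀,y₀) = MI⁽ⁿ⁾(x₀,y₀) + ∑_{k,l} (Wⁿ)((x₀,y₀),(k,l)) · MI⁽¹⁾(k,l)`, where
`MI⁽¹⁾(k,l) = ∑_{k',l'} W((k,l),(k',l')) log (W((k,l),(k',l')) / (M(k,k') M'(l,l')))`. -/
theorem mutual_information_recursion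
    {S : Type*} [Fintype S] [DecidableEq S] [Nonempty S]
    {Ω : Type*} [MeasurableSpace Ω] (μ : Measure Ω) [IsProbabilityMeasure μ]
    (W : Matrix (S × S) (S × S) ℝ)
    (hW0 : ∀ p p', 0 ≤ W p p') (hW1 : ∀ p, ∑ p', W p p' = 1)
    (M M' : Matrix S S ℝ)
    (hMrow : ∀ i, ∑ j, M i j = 1) (hM'row : ∀ i, ∑ j, M' i j = 1)
    (hM0 : ∀ i j, 0 ≤ M i j) (hM'0 : ∀ i j, 0 ≤ M' i j)
    (hM : ∀ k l k', ∑ l', W (k, l) (k', l') = M k k')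
    (hM' : ∀ k l l', ∑ k', W (k, l) (k', l') = M' l l')
    (x₀ y₀ : S) (X Y : ℕ → Ω → S)
    (hchain : ∀ (n : ℕ) (e : Fin (n + 1) → S × S),
      μ {ω | ∀ k : Fin (n + 1), (X k.val ω, Y k.val ω) = e k} =
        ENNReal.ofReal
          (if e 0 = (x₀, y₀) then ∏ k : Fin n, W (e k.castSucc) (e k.succ) else 0)) :
    ∀ n : ℕ,
      pathMI μ X Y (n + 1) =
        pathMI μ X Y n +
          ∑ k : S, ∑ l : S,
            (W ^ n) (x₀, y₀) (k, l) *
              (∑ k' : S, ∑ l' : S, mlog (W (k, l) (k', l')) (M k k' * M' l l')) := by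
  have hXY : IsMarkovChain μ (Pi.single (x₀, y₀) 1) W fun n ω ↦ (X n ω, Y n ω) :=
    .of_measure_eq (Pi.single_nonneg.mpr zero_le_one) hW0 fun n e ↦ by
      rw [hchain, pathWeight_single]
  intro n
  simpa only [pathMI_eq_mutualInfo, single_one_vecMul, dotProduct, relEntropy, row_apply,
    kroneckerMap_apply, Fintype.sum_prod_type] using
    mutual_information_recursion_general (by simp) hW1 hM hM' hXY n
end
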